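/- Let A be an abelian category with enough injective objects, and let X, ω, ν be classes of objects of A satisfying: (1) X is closed under extensions and direct summands; (2) ω is a relative cogenerator in X; (3) ν is closed under finite coproducts and Ext¹_A(ν,ν) = 0; (4) Ext¹_A(ω,ν^∨) = 0; (5) Ext^i_A(X,W) = 0 and Ext^i_A(X,V) = 0 for all i ≥ 1, X ∈ X, W ∈ ω, V ∈ ν. Then Ext^i_{Ch}(X•, D•) = 0 for every i ≥ 1, every complex X• ∈ Ch(X) and every complex D• ∈ ν̃^∨. -/

import Mathlib

/-!
The complexes in `ν̃` are contractible because `Ext¹(ν, ν) = 0`, so the Hom-complex from any `X•`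
into them is acyclic (`homAcyclic_of_contraction`). The relative cogenerator `ω` and the finite
`ν`-coresolutions give `Extⁱ(𝒳, ν^∨) = 0` for all `i ≥ 1` (`extZero_coresDimLE`); in particular,
short exact sequences of complexes with first term in `ν̃^∨` induce short exact sequences of
Hom-complexes out of `X• ∈ Ch(𝒳)`, and acyclicity passes to all of `ν̃^∨` by induction on the
coresolution dimension (`homAcyclic_coresDimLE`).

It remains to see that degreewise vanishing of `Ext` and acyclicity of the Hom-complex together
force `Extⁱ_{Ch}(X•, D•) = 0` (`extZero_complex`). Embed `D•` in a contractible injective complex.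
The quotient inherits both properties, which allows dimension shifting down to `i = 1`. There the
claim is that every chain map from `X•` to the quotient lifts to the injective complex; it does,
because it is null-homotopic and a null-homotopy can be lifted degree by degree.
-/

open CategoryTheory CategoryTheory.Limits

universe w w' v u

namespace BalancedSystems

variable {D : Type u} [Category.{v} D] [Abelian D]

/-- A class of objects is closed under isomorphisms. -/
def IsoClosed (X : Set D) : Prop := ∀ ⦃A B : D⦄, (A ≅ B) → A ∈ X → B ∈ X

/-- `f : A ⟶ B` and `g : B ⟶ E` form a short exact sequence `0 → A → B → E → 0`. -/
def IsSES {A B E : D} (f : A ⟶ B) (g : B ⟶ E) : Prop :=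
  ∃ w : f ≫ g = 0, (ShortComplex.mk f g w).ShortExact

/-- A class is closed under extensions. -/
def ExtensionClosed (X : Set D) : Prop :=
  ∀ ⦃A E B : D⦄ (f : A ⟶ E) (g : E ⟶ B), A ∈ X → B ∈ X → IsSES f g → E ∈ X

/-- A class is closed under direct summands. -/
def SummandClosed (X : Set D) : Prop :=
  ∀ ⦃A B : D⦄ (i : A ⟶ B) (r : B ⟶ A), i ≫ r = 𝟙 A → B ∈ X → A ∈ X

open ZeroObject in
/-- A class is pointed, i.e. contains the zero object. -/
def Pointed (X : Set D) : Prop := (0 : D) ∈ X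

/-- A class is closed under finite coproducts. -/
def FinCoprodClosed (X : Set D) : Prop :=
  Pointed X ∧ ∀ ⦃A B : D⦄, A ∈ X → B ∈ X → (A ⊞ B) ∈ X

/-- `X` is a generator in `X''`: every object of `X''` is an epimorphic image of an object of `X`. -/
def GeneratorIn (X X'' : Set D) : Prop :=
  ∀ M ∈ X'', ∃ A ∈ X, ∃ p : A ⟶ M, Epi p

/-- `Y` is a cogenerator in `Y''`. -/
def CogeneratorIn (Y Y'' : Set D) : Prop :=
  ∀ N ∈ Y'', ∃ B ∈ Y, ∃ j : N ⟶ B, Mono j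

/-- `ω` is a relative quasi-cogenerator in `X`. -/
def RelQuasiCogenerator (ω X : Set D) : Prop :=
  ∀ M ∈ X, ∃ W ∈ ω, ∃ M' ∈ X, ∃ (f : M ⟶ W) (g : W ⟶ M'), IsSES f g

/-- `ω` is a relative cogenerator in `X`. -/
def RelCogenerator (ω X : Set D) : Prop :=
  ω ⊆ X ∧ RelQuasiCogenerator ω X

/-- `ν` is a relative quasi-generator in `Y`. -/
def RelQuasiGenerator (ν Y : Set D) : Prop :=
  ∀ N ∈ Y, ∃ V ∈ ν, ∃ N' ∈ Y, ∃ (f : N' ⟶ V) (g : V ⟶ N), IsSES f g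

/-- `ν` is a relative generator in `Y`. -/
def RelGenerator (ν Y : Set D) : Prop :=
  ν ⊆ Y ∧ RelQuasiGenerator ν Y

/-- A (not necessarily exact) left resolution `⋯ → obj 1 → obj 0 → M → 0`. -/
structure LeftRes (M : D) : Type (max u v) where
  obj : ℕ → D
  d : ∀ n : ℕ, obj (n+1) ⟶ obj n
  aug : obj 0 ⟶ M
  dd : ∀ n : ℕ, d (n+1) ≫ d n = 0
  daug : d 0 ≫ aug = 0

namespace LeftRes

variable {M : D} (R : LeftRes M)

/-- All terms of the resolution belong to the class `X`. -/
def InClass (X : Set D) : Prop := ∀ n, R.obj n ∈ X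

/-- The resolution is `Hom(X,-)`-acyclic, i.e. proper. -/
def IsProper (X : Set D) : Prop :=
  ∀ A ∈ X,
    (∀ f : A ⟶ M, ∃ g : A ⟶ R.obj 0, g ≫ R.aug = f) ∧
    (∀ f : A ⟶ R.obj 0, f ≫ R.aug = 0 → ∃ g : A ⟶ R.obj 1, g ≫ R.d 0 = f) ∧
    (∀ (n : ℕ) (f : A ⟶ R.obj (n+1)), f ≫ R.d n = 0 → ∃ g : A ⟶ R.obj (n+2), g ≫ R.d (n+1) = f)

/-- The resolution (with its augmentation) is `Hom(-,Y)`-acyclic. -/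
def IsCoacyclic (Y : Set D) : Prop :=
  ∀ B ∈ Y,
    (∀ u : M ⟶ B, R.aug ≫ u = 0 → u = 0) ∧
    (∀ u : R.obj 0 ⟶ B, R.d 0 ≫ u = 0 → ∃ v : M ⟶ B, R.aug ≫ v = u) ∧
    (∀ (n : ℕ) (u : R.obj (n+1) ⟶ B), R.d (n+1) ≫ u = 0 → ∃ v : R.obj n ⟶ B, R.d n ≫ v = u)

/-- The augmented complex `⋯ → obj 1 → obj 0 → M → 0` is exact. -/
def IsExactRes : Prop :=
  Epi R.aug ∧ (ShortComplex.mk (R.d 0) R.aug R.daug).Exact ∧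
    ∀ n : ℕ, (ShortComplex.mk (R.d (n+1)) (R.d n) (R.dd n)).Exact

/-- The resolution is admissible: `obj 1 → obj 0 → M → 0` is exact. -/
def IsAdmissible : Prop :=
  Epi R.aug ∧ (ShortComplex.mk (R.d 0) R.aug R.daug).Exact

end LeftRes

/-- The class of objects admitting a proper left `X`-resolution. -/
def LPRes (X : Set D) : Set D :=
  {M | ∃ R : LeftRes M, R.InClass X ∧ R.IsProper X}

/-- A (not necessarily exact) right resolution `0 → N → obj 0 → obj 1 → ⋯`. -/
structure RightRes (N : D) : Type (max u v) where
  obj : ℕ → D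
  d : ∀ n : ℕ, obj n ⟶ obj (n+1)
  aug : N ⟶ obj 0
  dd : ∀ n : ℕ, d n ≫ d (n+1) = 0
  daug : aug ≫ d 0 = 0

namespace RightRes

variable {N : D} (S : RightRes N)

def InClass (Y : Set D) : Prop := ∀ n, S.obj n ∈ Y

/-- The resolution is `Hom(-,Y)`-acyclic, i.e. proper. -/
def IsProper (Y : Set D) : Prop :=
  ∀ B ∈ Y,
    (∀ f : N ⟶ B, ∃ g : S.obj 0 ⟶ B, S.aug ≫ g = f) ∧
    (∀ u : S.obj 0 ⟶ B, S.aug ≫ u = 0 → ∃ v : S.obj 1 ⟶ B, S.d 0 ≫ v = u) ∧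
    (∀ (n : ℕ) (u : S.obj (n+1) ⟶ B), S.d n ≫ u = 0 → ∃ v : S.obj (n+2) ⟶ B, S.d (n+1) ≫ v = u)

/-- The resolution (with its augmentation) is `Hom(X,-)`-acyclic. -/
def IsCoacyclic (X : Set D) : Prop :=
  ∀ A ∈ X,
    (∀ u : A ⟶ N, u ≫ S.aug = 0 → u = 0) ∧
    (∀ u : A ⟶ S.obj 0, u ≫ S.d 0 = 0 → ∃ v : A ⟶ N, v ≫ S.aug = u) ∧
    (∀ (n : ℕ) (u : A ⟶ S.obj (n+1)), u ≫ S.d (n+1) = 0 → ∃ v : A ⟶ S.obj n, v ≫ S.d n = u)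

/-- The augmented complex `0 → N → obj 0 → obj 1 → ⋯` is exact. -/
def IsExactRes : Prop :=
  Mono S.aug ∧ (ShortComplex.mk S.aug (S.d 0) S.daug).Exact ∧
    ∀ n : ℕ, (ShortComplex.mk (S.d n) (S.d (n+1)) (S.dd n)).Exact

/-- The resolution is admissible: `0 → N → obj 0 → obj 1` is exact. -/
def IsAdmissible : Prop :=
  Mono S.aug ∧ (ShortComplex.mk S.aug (S.d 0) S.daug).Exact

end RightRes

/-- The class of objects admitting a proper right `Y`-resolution. -/
def RPRes (Y : Set D) : Set D :=
  {N | ∃ S : RightRes N, S.InClass Y ∧ S.IsProper Y}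

/-- `(X,Y)` is a balanced pair with respect to `(Xt,Yt)`. -/
def IsBalancedPair (X Y Xt Yt : Set D) : Prop :=
  X ⊆ Xt ∧ Xt ⊆ LPRes X ∧ Y ⊆ Yt ∧ Yt ⊆ RPRes Y ∧
  (∀ M ∈ Xt, ∃ R : LeftRes M, R.InClass X ∧ R.IsProper X ∧ R.IsCoacyclic Y) ∧
  (∀ N ∈ Yt, ∃ S : RightRes N, S.InClass Y ∧ S.IsProper Y ∧ S.IsCoacyclic X)

/-- `(X,Y)` is an admissible balanced pair with respect to `(Xt,Yt)`. -/
def IsAdmissibleBalancedPair (X Y Xt Yt : Set D) : Prop :=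
  X ⊆ Xt ∧ Xt ⊆ LPRes X ∧ Y ⊆ Yt ∧ Yt ⊆ RPRes Y ∧
  (∀ M ∈ Xt, ∃ R : LeftRes M, R.InClass X ∧ R.IsProper X ∧ R.IsCoacyclic Y ∧ R.IsAdmissible) ∧
  (∀ N ∈ Yt, ∃ S : RightRes N, S.InClass Y ∧ S.IsProper Y ∧ S.IsCoacyclic X ∧ S.IsAdmissible)

/-- Objects of left `X`-resolution dimension at most `n`. -/
def ResDimLE (X : Set D) : ℕ → Set D
  | 0 => X
  | (n+1) => {M | ∃ K ∈ ResDimLE X n, ∃ A ∈ X, ∃ (f : K ⟶ A) (g : A ⟶ M), IsSES f g}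

/-- `X^∧` : objects of finite left `X`-resolution dimension. -/
def ResHat (X : Set D) : Set D := {M | ∃ n, M ∈ ResDimLE X n}

/-- Objects of right `X`-resolution dimension at most `n`. -/
def CoresDimLE (X : Set D) : ℕ → Set D
  | 0 => X
  | (n+1) => {M | ∃ A ∈ X, ∃ K ∈ CoresDimLE X n, ∃ (f : M ⟶ A) (g : A ⟶ K), IsSES f g}

/-- `X^∨` : objects of finite right `X`-resolution dimension. -/
def CoresVee (X : Set D) : Set D := {M | ∃ n, M ∈ CoresDimLE X n}

section Ext

variable [HasExt.{w} D]

/-- `Ext^i (A, B) = 0`. -/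
def ExtZero (A B : D) (i : ℕ) : Prop := Subsingleton (Abelian.Ext.{w} A B i)

/-- `X^⊥`: all higher Ext's from objects of `X` vanish. -/
def ExtPerp (X : Set D) : Set D :=
  {N | ∀ A ∈ X, ∀ i : ℕ, 1 ≤ i → ExtZero.{w} A N i}

/-- `^⊥Y`: all higher Ext's into objects of `Y` vanish. -/
def PerpExt (Y : Set D) : Set D :=
  {M | ∀ B ∈ Y, ∀ i : ℕ, 1 ≤ i → ExtZero.{w} M B i}

/-- `[(X,ω);(ν,Y)]` is a finite balanced system. -/
structure IsFiniteBalancedSystem (X ω ν Y : Set D) : Prop where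
  pointedX : Pointed X
  extClosedX : ExtensionClosed X
  pointedY : Pointed Y
  extClosedY : ExtensionClosed Y
  relCogenOmega : RelCogenerator ω X
  idXomega : ∀ A ∈ X, ∀ W ∈ ω, ∀ i : ℕ, 1 ≤ i → ExtZero.{w} A W i
  relGenNu : RelGenerator ν Y
  pdYnu : ∀ V ∈ ν, ∀ B ∈ Y, ∀ i : ℕ, 1 ≤ i → ExtZero.{w} V B i
  ext1_hatX_nu : ∀ M ∈ ResHat X, ∀ V ∈ ν, ExtZero.{w} M V 1
  ext1_hatOmega_Y : ∀ H ∈ ResHat ω, ∀ B ∈ Y, ExtZero.{w} H B 1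
  ext1_omega_veeY : ∀ W ∈ ω, ∀ N ∈ CoresVee Y, ExtZero.{w} W N 1
  ext1_X_veeNu : ∀ A ∈ X, ∀ L ∈ CoresVee ν, ExtZero.{w} A L 1

/-- `[(X,ω);(ν,Y)]` is a strongly finite balanced system. -/
structure IsStronglyFiniteBalancedSystem (X ω ν Y : Set D)
    extends IsFiniteBalancedSystem.{w} X ω ν Y : Prop where
  pdYomega : ∀ W ∈ ω, ∀ B ∈ Y, ∀ i : ℕ, 1 ≤ i → ExtZero.{w} W B i
  idXnu : ∀ A ∈ X, ∀ V ∈ ν, ∀ i : ℕ, 1 ≤ i → ExtZero.{w} A V i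

end Ext

end BalancedSystems
namespace BalancedSystems

variable {D : Type u} [Category.{v} D] [Abelian D]

/-- A bounded below complex `⋯ → M 2 → M 1 → M 0 → 0`, where `M 0` plays the
role of the `(-1)`-st term `M₋₁`. -/
structure BBComplex (D : Type u) [Category.{v} D] [Abelian D] : Type (max u v) where
  M : ℕ → D
  d : ∀ n : ℕ, M (n+1) ⟶ M n
  dd : ∀ n : ℕ, d (n+1) ≫ d n = 0

/-- A bounded below complex is `Hom(X,-)`-acyclic. -/
def BBComplex.HomAcyclic (X : Set D) (K : BBComplex D) : Prop :=
  ∀ A ∈ X,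
    (∀ f : A ⟶ K.M 0, ∃ g : A ⟶ K.M 1, g ≫ K.d 0 = f) ∧
    (∀ (n : ℕ) (f : A ⟶ K.M (n+1)), f ≫ K.d n = 0 →
      ∃ g : A ⟶ K.M (n+2), g ≫ K.d (n+1) = f)

/-- A short complex `Z → Mo → Z'` (i.e. `0 → Z → Mo → Z' → 0`) is
`Hom(X,-)`-acyclic. -/
def ShortHomAcyclic (X : Set D) {Z Mo Z' : D} (ι : Z ⟶ Mo) (p : Mo ⟶ Z') : Prop :=
  ∀ A ∈ X,
    (∀ u : A ⟶ Z, u ≫ ι = 0 → u = 0) ∧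
    (∀ u : A ⟶ Mo, u ≫ p = 0 → ∃ v : A ⟶ Z, v ≫ ι = u) ∧
    (∀ u : A ⟶ Z', ∃ v : A ⟶ Mo, v ≫ p = u)

namespace LeftRes

variable {M : D} (R : LeftRes M)

/-- Precomposition with the differential, as a morphism of abelian groups
`Hom(obj n, N) →+ Hom(obj (n+1), N)`. -/
def precompHom (N : D) (n : ℕ) : (R.obj n ⟶ N) →+ (R.obj (n+1) ⟶ N) :=
  AddMonoidHom.mk' (fun g => R.d n ≫ g) (by intro a b; simp)

/-- Cocycles of the complex `Hom(R, N)` in degree `n`. -/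
def cocycles (N : D) (n : ℕ) : AddSubgroup (R.obj n ⟶ N) := (R.precompHom N n).ker

/-- The relative extension groups `Ext̲ⁱ_X(M,N)` computed from the proper left
`X`-resolution `R` of `M`: the `i`-th cohomology of `Hom(R, N)`. -/
def ExtGrp (N : D) : ℕ → Type v
  | 0 => R.cocycles N 0
  | (n+1) => R.cocycles N (n+1) ⧸
      ((R.precompHom N n).range.addSubgroupOf (R.cocycles N (n+1)))

noncomputable instance (N : D) : ∀ i, AddCommGroup (R.ExtGrp N i)
  | 0 => inferInstanceAs (AddCommGroup (R.cocycles N 0))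
  | (n+1) => inferInstanceAs (AddCommGroup (R.cocycles N (n+1) ⧸
      ((R.precompHom N n).range.addSubgroupOf (R.cocycles N (n+1)))))

/-- Functoriality of `Ext̲⁰_X(M,-)`: postcomposition on `0`-cocycles. -/
def ext0Map {N N' : D} (g : N ⟶ N') (x : R.ExtGrp N 0) : R.ExtGrp N' 0 :=
  (⟨(x : R.cocycles N 0).1 ≫ g, by
      have hx := (x : R.cocycles N 0).2
      simp only [cocycles, AddMonoidHom.mem_ker, precompHom, AddMonoidHom.mk'_apply] at hx ⊢
      rw [← Category.assoc, hx, zero_comp]⟩ : R.cocycles N' 0)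

end LeftRes

namespace RightRes

variable {N : D} (S : RightRes N)

/-- Postcomposition with the differential, as a morphism of abelian groups
`Hom(M, obj n) →+ Hom(M, obj (n+1))`. -/
def postcompHom (M : D) (n : ℕ) : (M ⟶ S.obj n) →+ (M ⟶ S.obj (n+1)) :=
  AddMonoidHom.mk' (fun g => g ≫ S.d n) (by intro a b; simp)

/-- Cocycles of the complex `Hom(M, S)` in degree `n`. -/
def cocycles (M : D) (n : ℕ) : AddSubgroup (M ⟶ S.obj n) := (S.postcompHom M n).ker

/-- The relative extension groups `Ext̄ⁱ_Y(M,N)` computed from the proper right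
`Y`-resolution `S` of `N`: the `i`-th cohomology of `Hom(M, S)`. -/
def ExtGrp (M : D) : ℕ → Type v
  | 0 => S.cocycles M 0
  | (n+1) => S.cocycles M (n+1) ⧸
      ((S.postcompHom M n).range.addSubgroupOf (S.cocycles M (n+1)))

noncomputable instance (M : D) : ∀ i, AddCommGroup (S.ExtGrp M i)
  | 0 => inferInstanceAs (AddCommGroup (S.cocycles M 0))
  | (n+1) => inferInstanceAs (AddCommGroup (S.cocycles M (n+1) ⧸
      ((S.postcompHom M n).range.addSubgroupOf (S.cocycles M (n+1)))))

end RightRes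

section ChainComplexes

/-- The class of complexes all of whose terms lie in `X`. -/
def chClass (X : Set D) : Set (ChainComplex D ℤ) := {K | ∀ n : ℤ, K.X n ∈ X}

/-- `ν̃` : the class of exact complexes all of whose cycle objects lie in `ν`. -/
noncomputable def tildeClass (ν : Set D) : Set (ChainComplex D ℤ) :=
  {K | (∀ n : ℤ, K.ExactAt n) ∧ ∀ n : ℤ, (kernel (K.d n (n-1)) : D) ∈ ν}

end ChainComplexes

end BalancedSystems
namespace BalancedSystems

variable {D : Type u} [Category.{v} D] [Abelian D]

section HomComplex

variable (K L : ChainComplex D ℤ)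

/-- The `m`-th term of the Hom-complex `Hom(K,L)`:
`∏ᵢ Hom(Kᵢ, L_{i+m})`. -/
abbrev HomCgrp (m : ℤ) : Type v := ∀ i : ℤ, K.X i ⟶ L.X (i + m)

/-- The differential `∂_m` of the Hom-complex `Hom(K,L)`, going from degree `m`
to degree `m' = m - 1`, given by `∂_m(f)ᵢ = ∂^L_{m+i} ∘ fᵢ − (−1)^m fᵢ₋₁ ∘ ∂^K_i`. -/
noncomputable def homCdiff (m m' : ℤ) (h : m' = m - 1) :
    HomCgrp K L m →+ HomCgrp K L m' :=
  AddMonoidHom.mk'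
    (fun f i => f i ≫ L.d (i + m) (i + m') -
      (m.negOnePow : ℤ) •
        (K.d i (i-1) ≫ f (i-1) ≫ eqToHom (congrArg L.X (show (i-1) + m = i + m' by omega))))
    (by
      intro a b
      funext i
      simp only [Pi.add_apply, Preadditive.add_comp, Preadditive.comp_add, smul_add]
      abel)

/-- The `m`-th cohomology group of the Hom-complex `Hom(K,L)`. -/
noncomputable def HomCoh (m : ℤ) : Type v :=
  (homCdiff K L m (m-1) rfl).ker ⧸
    ((homCdiff K L (m+1) m (by omega)).range.addSubgroupOf (homCdiff K L m (m-1) rfl).ker)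

noncomputable instance (m : ℤ) : AddCommGroup (HomCoh K L m) :=
  inferInstanceAs (AddCommGroup ((homCdiff K L m (m-1) rfl).ker ⧸
    ((homCdiff K L (m+1) m (by omega)).range.addSubgroupOf (homCdiff K L m (m-1) rfl).ker)))

end HomComplex

end BalancedSystems
namespace BalancedSystems

variable {D : Type u} [Category.{v} D] [Abelian D]

/-- `L_X(X',X'')`: objects of `X''` admitting a proper left `X`-resolution with
all cycles in `X'`. -/
noncomputable def LClass (X X' X'' : Set D) : Set D :=
  {M | M ∈ X'' ∧ ∃ R : LeftRes M, R.InClass X ∧ R.IsProper X ∧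
    (kernel R.aug : D) ∈ X' ∧ ∀ n : ℕ, (kernel (R.d n) : D) ∈ X'}

/-- `L̄_X(X',X'') := L_X(X',X'') ∪ X`. -/
noncomputable def LBarClass (X X' X'' : Set D) : Set D := LClass X X' X'' ∪ X

/-- `R^Y(Y'',Y')`: objects of `Y''` admitting a proper right `Y`-resolution with
all cocycles in `Y'`. -/
noncomputable def RClass (Y Y'' Y' : Set D) : Set D :=
  {N | N ∈ Y'' ∧ ∃ S : RightRes N, S.InClass Y ∧ S.IsProper Y ∧
    (cokernel S.aug : D) ∈ Y' ∧ ∀ n : ℕ, (cokernel (S.d n) : D) ∈ Y'}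

/-- `R̄^Y(Y'',Y') := R^Y(Y'',Y') ∪ Y`. -/
noncomputable def RBarClass (Y Y'' Y' : Set D) : Set D := RClass Y Y'' Y' ∪ Y

section Ext

variable [HasExt.{w} D]

/-- `[(X,ω);(ν,Y)]` is a balanced system with respect to `[(X',X'');(Y'',Y')]`. -/
def IsBalancedSystem (X ω ν Y X' X'' Y'' Y' : Set D) : Prop :=
  (X ⊆ X'' ∧ X' ⊆ X'' ∧ X'' ⊆ LPRes X) ∧
  (Y ⊆ Y'' ∧ Y' ⊆ Y'' ∧ Y'' ⊆ RPRes Y) ∧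
  GeneratorIn X X'' ∧
  CogeneratorIn Y Y'' ∧
  RelGenerator ν Y ∧
  RelCogenerator ω X ∧
  ((∀ M ∈ X'', ∀ V ∈ ν, ExtZero.{w} M V 1) ∧ (∀ L ∈ X', ∀ B ∈ Y, ExtZero.{w} L B 1)) ∧
  ((∀ W ∈ ω, ∀ N ∈ Y'', ExtZero.{w} W N 1) ∧ (∀ A ∈ X, ∀ P ∈ Y', ExtZero.{w} A P 1))

/-- `(X,Y)` is a complete hereditary cotorsion pair. -/
def IsCompleteHereditaryCotorsionPair (X Y : Set D) : Prop :=
  (∀ M : D, M ∈ X ↔ ∀ B ∈ Y, ExtZero.{w} M B 1) ∧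
  (∀ N : D, N ∈ Y ↔ ∀ A ∈ X, ExtZero.{w} A N 1) ∧
  (∀ M : D, ∃ K ∈ Y, ∃ A ∈ X, ∃ (f : K ⟶ A) (g : A ⟶ M), IsSES f g) ∧
  (∀ M : D, ∃ B ∈ Y, ∃ Q ∈ X, ∃ (f : M ⟶ B) (g : B ⟶ Q), IsSES f g) ∧
  (∀ A ∈ X, ∀ B ∈ Y, ∀ i : ℕ, 1 ≤ i → ExtZero.{w} A B i)

/-- `LPRes⁰(X)`: objects of `LPRes(X)` admitting an exact left `X`-resolution
with all cycles in `X^⊥`. -/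
noncomputable def LPRes0 (X : Set D) : Set D :=
  LPRes X ∩ {M | ∃ R : LeftRes M, R.InClass X ∧ R.IsExactRes ∧
    (kernel R.aug : D) ∈ ExtPerp.{w} X ∧ ∀ n : ℕ, (kernel (R.d n) : D) ∈ ExtPerp.{w} X}

/-- `RPRes⁰(Y)`: objects of `RPRes(Y)` admitting an exact right `Y`-resolution
with all cocycles in `^⊥Y`. -/
noncomputable def RPRes0 (Y : Set D) : Set D :=
  RPRes Y ∩ {N | ∃ S : RightRes N, S.InClass Y ∧ S.IsExactRes ∧
    (cokernel S.aug : D) ∈ PerpExt.{w} Y ∧ ∀ n : ℕ, (cokernel (S.d n) : D) ∈ PerpExt.{w} Y}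

end Ext

end BalancedSystems

namespace BalancedSystems

open Abelian

/-! ### Vanishing of Ext along short exact sequences -/

section ExtLemmas

variable {D : Type u} [Category.{v} D] [Abelian D] [HasExt.{w} D]

lemma exists_lift_of_extZero {S : ShortComplex D} (hS : S.ShortExact) {A : D}
    (h : ExtZero.{w} A S.X₁ 1) (f : A ⟶ S.X₃) : ∃ g : A ⟶ S.X₂, g ≫ S.g = f := by
  obtain ⟨y, hy⟩ := Ext.covariant_sequence_exact₃ A hS (Ext.mk₀ f) (zero_add 1)
    (h.elim _ _)
  obtain ⟨g, rfl⟩ := Ext.mk₀_bijective _ _ |>.2 y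
  refine ⟨g, (Ext.mk₀_bijective A S.X₃).1 ?_⟩
  rw [← hy, Ext.mk₀_comp_mk₀]

lemma extZero_X₃ {S : ShortComplex D} (hS : S.ShortExact) {A : D} {n : ℕ}
    (h₂ : ExtZero.{w} A S.X₂ n) (h₁ : ExtZero.{w} A S.X₁ (n + 1)) : ExtZero.{w} A S.X₃ n := by
  refine subsingleton_of_forall_eq 0 fun x => ?_
  obtain ⟨y, rfl⟩ := Ext.covariant_sequence_exact₃ A hS x rfl (h₁.elim _ _)
  rw [h₂.elim y 0, Ext.zero_comp]

lemma extZero_X₁ {S : ShortComplex D} (hS : S.ShortExact) {A : D} {n : ℕ}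
    (h₃ : ExtZero.{w} A S.X₃ n) (h₂ : ExtZero.{w} A S.X₂ (n + 1)) :
    ExtZero.{w} A S.X₁ (n + 1) := by
  refine subsingleton_of_forall_eq 0 fun x => ?_
  obtain ⟨y, rfl⟩ := Ext.covariant_sequence_exact₁ A hS x (h₂.elim _ _) rfl
  rw [h₃.elim y 0, Ext.zero_comp]

lemma extZero_one_of_surjective {S : ShortComplex D} (hS : S.ShortExact) {A : D}
    (h₂ : ExtZero.{w} A S.X₂ 1) (h : ∀ f : A ⟶ S.X₃, ∃ g : A ⟶ S.X₂, g ≫ S.g = f) :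
    ExtZero.{w} A S.X₁ 1 := by
  refine subsingleton_of_forall_eq 0 fun x => ?_
  obtain ⟨y, rfl⟩ := Ext.covariant_sequence_exact₁ A hS x (h₂.elim _ _) (zero_add 1)
  obtain ⟨f, rfl⟩ := (Ext.mk₀_bijective _ _).2 y
  obtain ⟨g, rfl⟩ := h f
  rw [← Ext.mk₀_comp_mk₀, Ext.comp_assoc_of_second_deg_zero, hS.comp_extClass, Ext.comp_zero]

/-- The cogenerator `ω` promotes the vanishing `Ext¹(ω, ν^∨) = 0` to `Extⁱ(𝒳, ν^∨) = 0` for all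
`i ≥ 1`: with `0 → A → W → A' → 0`, the group `Ext¹(A, L)` is squeezed between `Ext¹(W, L)`
and `Ext²(A', L)`, and higher degrees shift down along a finite `ν`-coresolution of `L`. -/
lemma extZero_coresDimLE {𝒳 ω ν : Set D} (hω : RelCogenerator ω 𝒳)
    (e4 : ∀ W ∈ ω, ∀ L ∈ CoresVee ν, ExtZero.{w} W L 1)
    (e5' : ∀ A ∈ 𝒳, ∀ V ∈ ν, ∀ i : ℕ, 1 ≤ i → ExtZero.{w} A V i) (n : ℕ) :
    ∀ L ∈ CoresDimLE ν n, ∀ A ∈ 𝒳, ∀ i : ℕ, 1 ≤ i → ExtZero.{w} A L i := by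
  induction n with
  | zero => exact fun L hL A hA i hi => e5' A hA L hL i hi
  | succ n ih =>
    intro L hL A hA i hi
    obtain ⟨V, hV, K, hK, f, g, _, hS⟩ := id hL
    have high : ∀ B ∈ 𝒳, ∀ j : ℕ, 1 ≤ j → ExtZero.{w} B L (j + 1) := fun B hB j hj =>
      extZero_X₁ hS (ih K hK B hB j hj) (e5' B hB V hV (j + 1) (by omega))
    obtain _ | _ | j := i
    · omega
    · obtain ⟨W, hW, A', hA', a, b, _, hT⟩ := hω.2 A hA
      refine subsingleton_of_forall_eq 0 fun x => ?_
      obtain ⟨y, rfl⟩ := Ext.contravariant_sequence_exact₁ hT L x (n₁ := 2) rfl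
        ((high A' hA' 1 le_rfl).elim _ _)
      rw [(e4 W hW L ⟨_, hL⟩).elim y 0, Ext.comp_zero]
    · exact high A hA (j + 1) (by omega)

end ExtLemmas

/-! ### Acyclic Hom-complexes -/

section HomAcyclic

variable {C : Type u} [Category.{v} C] [Abelian C]

/-- The Hom-complex from `X` to `V` is acyclic in every degree, for both sign conventions
`ε = ±1`. A family `f i j : X i ⟶ V j` encodes cochains of all degrees `j - i` at once; since the
cocycle equation `f ∂ = ε ∂ f` and the coboundary equation `f = h ∂ + ε ∂ h` are homogeneous,
no bookkeeping of degrees is needed. Quantifying over `ε` makes the notion stable under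
shifting the degree by one, which exchanges the two signs. -/
def HomAcyclic (X V : ChainComplex C ℤ) : Prop :=
  ∀ (ε : ℤ), ε * ε = 1 → ∀ f : ∀ i j : ℤ, X.X i ⟶ V.X j,
    (∀ i j, f (i + 1) (j + 1) ≫ V.d (j + 1) j = ε • (X.d (i + 1) i ≫ f i j)) →
    ∃ h : ∀ i j : ℤ, X.X i ⟶ V.X j, ∀ i j,
      f (i + 1) j = h (i + 1) (j + 1) ≫ V.d (j + 1) j + ε • (X.d (i + 1) i ≫ h i j)

/-- A contraction of `V`: a homotopy from the identity to zero. Only the values `s a (a + 1)`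
matter. -/
def IsContraction {V : ChainComplex C ℤ} (s : ∀ a b : ℤ, V.X a ⟶ V.X b) : Prop :=
  ∀ a : ℤ, s (a + 1) (a + 1 + 1) ≫ V.d (a + 1 + 1) (a + 1) + V.d (a + 1) a ≫ s a (a + 1) =
    𝟙 (V.X (a + 1))

lemma homAcyclic_of_contraction (X : ChainComplex C ℤ) {V : ChainComplex C ℤ}
    {s : ∀ a b : ℤ, V.X a ⟶ V.X b} (hs : IsContraction s) : HomAcyclic X V := by
  intro ε hε f hf
  have key : ∀ i a b c : ℤ, a + 1 = b → c + 1 = b →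
      f i a ≫ s a b = f i c ≫ s c b := by
    intro i a b c h h'
    obtain rfl : a = c := by omega
    rfl
  refine ⟨fun i j => f i (j - 1) ≫ s (j - 1) j, fun i j => ?_⟩
  obtain ⟨k, rfl⟩ : ∃ k, j = k + 1 := ⟨j - 1, by omega⟩
  dsimp only
  rw [key (i + 1) (k + 1 + 1 - 1) (k + 1 + 1) (k + 1) (by omega) (by omega),
    key i (k + 1 - 1) (k + 1) k (by omega) (by omega)]
  have h1 : ε • (X.d (i + 1) i ≫ f i k ≫ s k (k + 1)) =
      f (i + 1) (k + 1) ≫ V.d (k + 1) k ≫ s k (k + 1) := by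
    rw [← Category.assoc, ← Preadditive.zsmul_comp, ← hf, Category.assoc]
  rw [h1, Category.assoc, ← Preadditive.comp_add, hs k, Category.comp_id]

variable {S : ShortComplex (ChainComplex C ℤ)}

lemma shortExact_eval (hS : S.ShortExact) (j : ℤ) :
    (ShortComplex.mk (S.f.f j) (S.g.f j) (by
      rw [← HomologicalComplex.comp_f, S.zero]; rfl)).ShortExact :=
  hS.map_of_exact (HomologicalComplex.eval C (ComplexShape.down ℤ) j)

lemma exists_factor (hS : S.ShortExact) (j : ℤ) {A : C}
    (f : A ⟶ S.X₂.X j) (hf : f ≫ S.g.f j = 0) :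
    ∃ g : A ⟶ S.X₁.X j, g ≫ S.f.f j = f := by
  have h := shortExact_eval hS j
  have := h.mono_f
  exact ⟨h.exact.lift f hf, h.exact.lift_f f hf⟩

lemma eq_of_comp_f (hS : S.ShortExact) (j : ℤ) {A : C} {f g : A ⟶ S.X₁.X j}
    (h : f ≫ S.f.f j = g ≫ S.f.f j) :
    f = g := by
  have := (shortExact_eval hS j).mono_f
  exact (cancel_mono (S.f.f j)).1 h

/-- If the Hom-complexes into the last two terms of a short exact sequence are acyclic and maps
out of `X` lift degreewise along its epimorphism, then the Hom-complex into the first term is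
acyclic. -/
lemma HomAcyclic.of_ses₁ (hS : S.ShortExact) {X : ChainComplex C ℤ}
    (lift : ∀ i j, ∀ f : X.X i ⟶ S.X₃.X j, ∃ g : X.X i ⟶ S.X₂.X j, g ≫ S.g.f j = f)
    (h₂ : HomAcyclic X S.X₂) (h₃ : HomAcyclic X S.X₃) : HomAcyclic X S.X₁ := by
  intro ε hε f hf
  have zero : ∀ j, S.f.f j ≫ S.g.f j = 0 := fun j => by
    rw [← HomologicalComplex.comp_f, S.zero]; rfl
  obtain ⟨h, hh⟩ := h₂ ε hε (fun i j => f i j ≫ S.f.f j) (fun i j => by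
    rw [Category.assoc, S.f.comm, reassoc_of% hf i j, Preadditive.zsmul_comp, Category.assoc])
  -- The null-homotopy `h` in the middle term becomes a cocycle of the opposite sign in the quotient.
  obtain ⟨k, hk⟩ := h₃ (-ε) (by simpa using hε) (fun i j => h i j ≫ S.g.f j) (fun i j => by
    have := congrArg (· ≫ S.g.f j) (hh i j)
    simp only [Category.assoc, zero, comp_zero, Preadditive.add_comp,
      Preadditive.zsmul_comp] at this
    rw [Category.assoc, S.g.comm, neg_smul, eq_neg_iff_add_eq_zero, this.symm])
  choose k' hk' using fun i j => lift i j (k i j)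
  have corr : ∀ i j, ∃ q : X.X i ⟶ S.X₁.X j, ∀ i', i' + 1 = i →
      q ≫ S.f.f j = h i j - k' i (j + 1) ≫ S.X₂.d (j + 1) j + ε • (X.d i i' ≫ k' i' j) := by
    intro i j
    obtain ⟨i, rfl⟩ : ∃ k, i = k + 1 := ⟨i - 1, by omega⟩
    obtain ⟨q, hq⟩ := exists_factor hS j
      (h (i + 1) j - k' (i + 1) (j + 1) ≫ S.X₂.d (j + 1) j + ε • (X.d (i + 1) i ≫ k' i j)) (by
        have := hk i j
        simp only [Preadditive.add_comp, Preadditive.sub_comp, Preadditive.zsmul_comp,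
          Category.assoc, ← S.g.comm, hk', reassoc_of% hk' (i + 1) (j + 1), this, neg_smul]
        abel)
    refine ⟨q, fun i' hi' => ?_⟩
    obtain rfl : i' = i := by omega
    exact hq
  choose q hq using corr
  refine ⟨q, fun i j => eq_of_comp_f hS j ?_⟩
  obtain ⟨l, rfl⟩ : ∃ k, i = k + 1 := ⟨i - 1, by omega⟩
  have e1 := hq (l + 1 + 1) (j + 1) (l + 1) rfl
  have e2 := hq (l + 1) j l rfl
  have := hh (l + 1) j
  simp only [Preadditive.add_comp, Preadditive.zsmul_comp, Category.assoc, ← S.f.comm,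
    reassoc_of% e1, e2] at this ⊢
  simp only [Preadditive.comp_add, Preadditive.sub_comp,
    Preadditive.comp_sub, Preadditive.comp_zsmul, Category.assoc,
    HomologicalComplex.d_comp_d, HomologicalComplex.d_comp_d_assoc, comp_zero, zero_comp, this,
    smul_sub, smul_add, smul_zero]
  abel

/-- If the Hom-complexes into the first two terms of a short exact sequence are acyclic and maps
out of `X` lift degreewise along its epimorphism, then the Hom-complex into the last term is
acyclic. -/
lemma HomAcyclic.of_ses₃ (hS : S.ShortExact) {X : ChainComplex C ℤ}
    (lift : ∀ i j, ∀ f : X.X i ⟶ S.X₃.X j, ∃ g : X.X i ⟶ S.X₂.X j, g ≫ S.g.f j = f)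
    (h₁ : HomAcyclic X S.X₁) (h₂ : HomAcyclic X S.X₂) : HomAcyclic X S.X₃ := by
  intro ε hε f hf
  have zero : ∀ j, S.f.f j ≫ S.g.f j = 0 := fun j => by
    rw [← HomologicalComplex.comp_f, S.zero]; rfl
  choose f' hf' using fun i j => lift i j (f i j)
  -- The failure of the lift `f'` to be a cocycle takes values in the subcomplex.
  have corr : ∀ i j, ∃ q : X.X i ⟶ S.X₁.X j, ∀ i', i' + 1 = i →
      q ≫ S.f.f j = f' i (j + 1) ≫ S.X₂.d (j + 1) j - ε • (X.d i i' ≫ f' i' j) := by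
    intro i j
    obtain ⟨i, rfl⟩ : ∃ k, i = k + 1 := ⟨i - 1, by omega⟩
    obtain ⟨q, hq⟩ := exists_factor hS j
      (f' (i + 1) (j + 1) ≫ S.X₂.d (j + 1) j - ε • (X.d (i + 1) i ≫ f' i j)) (by
        simp only [Preadditive.sub_comp, Preadditive.zsmul_comp,
          Category.assoc, ← S.g.comm, hf', reassoc_of% hf' (i + 1) (j + 1), hf, sub_self])
    refine ⟨q, fun i' hi' => ?_⟩
    obtain rfl : i' = i := by omega
    exact hq
  choose q hq using corr
  obtain ⟨h, hh⟩ := h₁ (-ε) (by simpa using hε) q (fun i j => eq_of_comp_f hS j (by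
    obtain ⟨l, rfl⟩ : ∃ k, i = k + 1 := ⟨i - 1, by omega⟩
    have e1 := hq (l + 1 + 1) (j + 1) (l + 1) rfl
    have e2 := hq (l + 1) j l rfl
    simp only [Preadditive.zsmul_comp, Preadditive.neg_comp, Category.assoc, ← S.f.comm,
      reassoc_of% e1, e2, Preadditive.sub_comp, Preadditive.comp_sub, Preadditive.comp_zsmul,
      HomologicalComplex.d_comp_d, HomologicalComplex.d_comp_d_assoc, comp_zero, zero_comp,
      smul_zero, zero_sub, sub_zero, neg_smul]))
  obtain ⟨k, hk⟩ := h₂ ε hε (fun i j => f' i j - h i j ≫ S.f.f j) (fun i j => by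
    have e1 := hq (i + 1) j i rfl
    rw [hh i j] at e1
    simp only [Preadditive.sub_comp, Preadditive.comp_sub, Preadditive.add_comp, Category.assoc,
      S.f.comm, neg_smul, Preadditive.neg_comp, Preadditive.zsmul_comp, smul_sub] at e1 ⊢
    rw [sub_eq_sub_iff_add_eq_add, ← sub_eq_zero]
    rw [← sub_eq_zero] at e1
    rw [← neg_eq_zero, ← e1]
    abel)
  refine ⟨fun i j => k i j ≫ S.g.f j, fun i j => ?_⟩
  have := congrArg (· ≫ S.g.f j) (hk i j)
  simpa only [Preadditive.sub_comp, Category.assoc, zero, comp_zero, sub_zero, hf',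
    Preadditive.add_comp, Preadditive.zsmul_comp, ← S.g.comm] using this

/-- If the Hom-complex into the last term is acyclic and maps out of `X` lift degreewise, then
chain maps out of `X` lift along `S.g`: a null-homotopic map lifts by lifting a null-homotopy. -/
lemma HomAcyclic.exists_chain_lift {X : ChainComplex C ℤ}
    (lift : ∀ i j, ∀ f : X.X i ⟶ S.X₃.X j, ∃ g : X.X i ⟶ S.X₂.X j, g ≫ S.g.f j = f)
    (h₃ : HomAcyclic X S.X₃) (f : X ⟶ S.X₃) : ∃ g : X ⟶ S.X₂, g ≫ S.g = f := by
  obtain ⟨h, hh⟩ := h₃ 1 (by norm_num)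
    (fun i j => if e : i = j then f.f i ≫ eqToHom (by rw [e]) else 0) (fun i j => by
      by_cases e : i = j
      · subst e; simp
      · simp [e])
  choose h' hh' using fun i j => lift i j (h i j)
  refine ⟨{ f := fun i => h' i (i + 1) ≫ S.X₂.d (i + 1) i + X.d i (i - 1) ≫ h' (i - 1) i,
            comm' := ?_ }, ?_⟩
  · rintro i j (rfl : j + 1 = i)
    obtain ⟨l, rfl⟩ : ∃ k, j = k + 1 := ⟨j - 1, by omega⟩
    have e : l + 1 + 1 - 1 = l + 1 := by omega
    simp only [Preadditive.add_comp, Preadditive.comp_add, Category.assoc,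
      HomologicalComplex.d_comp_d, HomologicalComplex.d_comp_d_assoc, comp_zero, zero_comp,
      zero_add, add_zero]
    rw [e]
  · ext i
    obtain ⟨l, rfl⟩ : ∃ k, i = k + 1 := ⟨i - 1, by omega⟩
    have e : l + 1 - 1 = l := by omega
    have := hh l (l + 1)
    simp only [dite_true, eqToHom_refl, Category.comp_id, one_smul] at this
    simp only [HomologicalComplex.comp_f, Preadditive.add_comp, Category.assoc, ← S.g.comm,
      reassoc_of% hh' (l + 1) (l + 1 + 1), hh', this]
    rw [e]

end HomAcyclic

/-! ### Contractible injective complexes and dimension shifting -/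

section InjectiveComplex

variable {C : Type u} [Category.{v} C] [Abelian C]

/-- The product of discs on a family `I` of objects: `I i ⊞ I (i - 1)` in degree `i`, with
differential `(x, y) ↦ (y, 0)`. A chain map into it amounts to a family of maps into the `I i`. -/
noncomputable def discComplex (I : ℤ → C) : ChainComplex C ℤ where
  X i := I i ⊞ I (i - 1)
  d i j := if h : i - 1 = j then biprod.snd ≫ eqToHom (congrArg I h) ≫ biprod.inl else 0
  shape i j h := dif_neg fun e => h (show j + 1 = i by omega)
  d_comp_d' := by
    rintro i j k (rfl : j + 1 = i) (rfl : k + 1 = j)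
    rw [dif_pos (by omega), dif_pos (by omega)]
    simp

/-- The projection of a product of discs to the first summand in degree `i`. -/
noncomputable def discFst (I : ℤ → C) (i : ℤ) : (discComplex I).X i ⟶ I i :=
  (biprod.fst : I i ⊞ I (i - 1) ⟶ _)

/-- The projection of a product of discs to the second summand in degree `i`. -/
noncomputable def discSnd (I : ℤ → C) (i : ℤ) : (discComplex I).X i ⟶ I (i - 1) :=
  (biprod.snd : I i ⊞ I (i - 1) ⟶ _)

/-- The inclusion of the first summand of a product of discs in degree `i`. -/
noncomputable def discInl (I : ℤ → C) (i : ℤ) : I i ⟶ (discComplex I).X i :=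
  (biprod.inl : _ ⟶ I i ⊞ I (i - 1))

/-- The inclusion of the second summand of a product of discs in degree `i`. -/
noncomputable def discInr (I : ℤ → C) (i : ℤ) : I (i - 1) ⟶ (discComplex I).X i :=
  (biprod.inr : _ ⟶ I i ⊞ I (i - 1))

lemma discInl_fst (I : ℤ → C) (i : ℤ) : discInl I i ≫ discFst I i = 𝟙 _ := biprod.inl_fst

lemma discInr_snd (I : ℤ → C) (i : ℤ) : discInr I i ≫ discSnd I i = 𝟙 _ := biprod.inr_snd

lemma discInl_snd (I : ℤ → C) (i : ℤ) : discInl I i ≫ discSnd I i = 0 := biprod.inl_snd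

lemma discInr_fst (I : ℤ → C) (i : ℤ) : discInr I i ≫ discFst I i = 0 := biprod.inr_fst

lemma discInl_fst_assoc (I : ℤ → C) (i : ℤ) {A : C} (h : I i ⟶ A) :
    discInl I i ≫ discFst I i ≫ h = h := by
  rw [← Category.assoc, discInl_fst, Category.id_comp]

lemma discInr_snd_assoc (I : ℤ → C) (i : ℤ) {A : C} (h : I (i - 1) ⟶ A) :
    discInr I i ≫ discSnd I i ≫ h = h := by
  rw [← Category.assoc, discInr_snd, Category.id_comp]

lemma discInl_snd_assoc (I : ℤ → C) (i : ℤ) {A : C} (h : I (i - 1) ⟶ A) :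
    discInl I i ≫ discSnd I i ≫ h = 0 := by
  rw [← Category.assoc, discInl_snd, zero_comp]

lemma disc_total (I : ℤ → C) (i : ℤ) :
    discFst I i ≫ discInl I i + discSnd I i ≫ discInr I i = 𝟙 _ := biprod.total

lemma discComplex_d (I : ℤ → C) (i j : ℤ) (h : i - 1 = j) : (discComplex I).d i j =
    discSnd I i ≫ eqToHom (congrArg I h) ≫ discInl I j :=
  dif_pos h

lemma disc_X_hom_ext {I : ℤ → C} {A : C} {i : ℤ} {f g : A ⟶ (discComplex I).X i}
    (h₁ : f ≫ discFst I i = g ≫ discFst I i) (h₂ : f ≫ discSnd I i = g ≫ discSnd I i) :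
    f = g :=
  biprod.hom_ext (X := I i) (Y := I (i - 1)) f g h₁ h₂

/-- The chain map to the product of discs with given components. -/
noncomputable def toDisc {A : ChainComplex C ℤ} {I : ℤ → C} (a : ∀ i, A.X i ⟶ I i) :
    A ⟶ discComplex I where
  f i := a i ≫ discInl I i + A.d i (i - 1) ≫ a (i - 1) ≫ discInr I i
  comm' := by
    intro i j hij
    obtain rfl : j = i - 1 := by
      have : j + 1 = i := hij
      omega
    rw [discComplex_d I i (i - 1) rfl]
    simp [discInl_snd_assoc, discInr_snd_assoc]

lemma toDisc_fst {A : ChainComplex C ℤ} {I : ℤ → C} (a : ∀ i, A.X i ⟶ I i) (i : ℤ) :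
    (toDisc a).f i ≫ discFst I i = a i := by
  simp [toDisc, discInl_fst, discInr_fst]

lemma disc_hom_ext {A : ChainComplex C ℤ} {I : ℤ → C} {f g : A ⟶ discComplex I}
    (h : ∀ i, f.f i ≫ discFst I i = g.f i ≫ discFst I i) : f = g := by
  have aux : ∀ (f : A ⟶ discComplex I) i, f.f i ≫ discSnd I i =
      A.d i (i - 1) ≫ f.f (i - 1) ≫ discFst I (i - 1) := by
    intro f i
    rw [← f.comm_assoc, discComplex_d I i (i - 1) rfl]
    simp [discInl_fst]
  ext i
  exact disc_X_hom_ext (h i) (by rw [aux, aux, h])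

instance discComplex_injective (I : ℤ → C) [∀ i, Injective (I i)] :
    Injective (discComplex I) where
  factors {A B} g f _ := by
    refine ⟨toDisc fun i => Injective.factorThru (g.f i ≫ discFst I i) (f.f i),
      disc_hom_ext fun i => ?_⟩
    rw [HomologicalComplex.comp_f, Category.assoc, toDisc_fst, Injective.comp_factorThru]

instance discComplex_X_injective (I : ℤ → C) [∀ i, Injective (I i)] (i : ℤ) :
    Injective ((discComplex I).X i) :=
  inferInstanceAs (Injective (I i ⊞ I (i - 1)))

lemma exists_contraction_discComplex (I : ℤ → C) :
    ∃ s : ∀ a b : ℤ, (discComplex I).X a ⟶ (discComplex I).X b, IsContraction s := by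
  refine ⟨fun a b => if h : a = b - 1 then discFst I a ≫
    eqToHom (congrArg I h) ≫ discInr I b else 0, fun a => ?_⟩
  have h1 : a + 1 = a + 1 + 1 - 1 := by omega
  have h2 : a = a + 1 - 1 := by omega
  dsimp only
  rw [dif_pos h1, dif_pos h2, discComplex_d I _ _ h1.symm, discComplex_d I _ _ h2.symm]
  simp [discInr_snd_assoc, discInl_fst_assoc, disc_total]

/-- Every complex embeds in a contractible injective complex, hence in a short exact sequence. -/
lemma exists_ses_disc [EnoughInjectives C] (V : ChainComplex C ℤ) :
    ∃ (I : ℤ → C) (_ : ∀ i, Injective (I i)) (Q : ChainComplex C ℤ)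
      (f : V ⟶ discComplex I) (g : discComplex I ⟶ Q), IsSES f g := by
  let φ : V ⟶ discComplex (fun i => Injective.under (V.X i)) :=
    toDisc fun i => Injective.ι (V.X i)
  have hm : Mono φ := by
    have : ∀ i, Mono (φ.f i) := fun i => by
      exact mono_of_mono_fac (toDisc_fst (fun i => Injective.ι (V.X i)) i)
    exact HomologicalComplex.mono_of_mono_f φ this
  exact ⟨_, fun i => inferInstance, cokernel φ, φ, cokernel.π φ, cokernel.condition φ,
    { exact := ShortComplex.exact_cokernel φ }⟩

/-- Degreewise vanishing of `Ext` together with acyclicity of the Hom-complex forces vanishing of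
`Ext` of complexes. By dimension shifting along an embedding in a contractible injective complex,
everything reduces to lifting chain maps to the quotient. -/
lemma extZero_complex [EnoughInjectives C] [HasExt.{w} C] [HasExt.{w'} (ChainComplex C ℤ)]
    (X : ChainComplex C ℤ) (n : ℕ) : ∀ V : ChainComplex C ℤ,
      (∀ i j, ∀ m : ℕ, 1 ≤ m → ExtZero.{w} (X.X i) (V.X j) m) → HomAcyclic X V →
      ExtZero.{w'} X V (n + 1) := by
  induction n with
  | zero =>
    intro V hE hV
    obtain ⟨I, _, Q, f, g, _, hS⟩ := exists_ses_disc V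
    obtain ⟨s, hs⟩ := exists_contraction_discComplex I
    have lift := fun i j =>
      exists_lift_of_extZero (shortExact_eval hS j) (hE i j 1 le_rfl)
    exact extZero_one_of_surjective hS (Ext.subsingleton_of_injective _ _ _)
      (HomAcyclic.exists_chain_lift lift
        (HomAcyclic.of_ses₃ hS lift hV (homAcyclic_of_contraction X hs)))
  | succ n ih =>
    intro V hE hV
    obtain ⟨I, _, Q, f, g, _, hS⟩ := exists_ses_disc V
    obtain ⟨s, hs⟩ := exists_contraction_discComplex I
    have lift := fun i j =>
      exists_lift_of_extZero (shortExact_eval hS j) (hE i j 1 le_rfl)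
    refine extZero_X₁ hS (ih Q (fun i j m hm => ?_)
      (HomAcyclic.of_ses₃ hS lift hV (homAcyclic_of_contraction X hs)))
      (Ext.subsingleton_of_injective _ _ _)
    obtain ⟨m, rfl⟩ : ∃ k, m = k + 1 := ⟨m - 1, by omega⟩
    exact extZero_X₃ (shortExact_eval hS j) (Ext.subsingleton_of_injective _ _ _)
      (hE i j (m + 1 + 1) (by omega))

end InjectiveComplex

/-! ### The classes `ν̃` and `ν̃^∨` -/

section TildeClass

variable {C : Type u} [Category.{v} C] [Abelian C]

/-- In an exact complex, `0 → Z_{n+1} → V_{n+1} → Z_n → 0` is short exact. -/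
lemma shortExact_cycles {V : ChainComplex C ℤ} (hV : ∀ n, V.ExactAt n) (n : ℤ) :
    IsSES (kernel.ι (V.d (n + 1) (n + 1 - 1)))
      (kernel.lift (V.d n (n - 1)) (V.d (n + 1) n) (V.d_comp_d _ _ _)) := by
  have hn : n + 1 - 1 = n := by omega
  have w : kernel.ι (V.d (n + 1) (n + 1 - 1)) ≫
      kernel.lift (V.d n (n - 1)) (V.d (n + 1) n) (V.d_comp_d _ _ _) = 0 := by
    rw [← cancel_mono (kernel.ι _), Category.assoc, kernel.lift_ι, zero_comp]
    have gen : ∀ k, k = n → kernel.ι (V.d (n + 1) k) ≫ V.d (n + 1) n = 0 := by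
      rintro k rfl
      exact kernel.condition _
    exact gen _ hn
  refine ⟨w, ?_⟩
  have hepi : Epi (kernel.lift (V.d n (n - 1)) (V.d (n + 1) n) (V.d_comp_d _ _ _)) := by
    have := (HomologicalComplex.exactAt_iff' V (n + 1) n (n - 1) (by simp) (by simp)).1 (hV n)
    exact (ShortComplex.exact_iff_epi_kernel_lift _).1 this
  have hex : (ShortComplex.mk _ _ w).Exact := by
    refine ShortComplex.exact_of_f_is_kernel _ (KernelFork.IsLimit.ofι' _ _ fun k hk => ?_)
    refine ⟨kernel.lift _ k ?_, kernel.lift_ι _ _ _⟩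
    have := congrArg (· ≫ kernel.ι _) hk
    simp only [Category.assoc, kernel.lift_ι, zero_comp] at this
    rwa [hn]
  exact { exact := hex }

variable [HasExt.{w} C] {ν : Set C}

lemma mem_of_mem_tildeClass (h3 : IsoClosed ν) (hνcp : FinCoprodClosed ν)
    (hνν : ∀ V ∈ ν, ∀ V' ∈ ν, ExtZero.{w} V V' 1) {V : ChainComplex C ℤ}
    (hV : V ∈ tildeClass ν) (j : ℤ) : V.X j ∈ ν := by
  obtain ⟨n, rfl⟩ : ∃ k, j = k + 1 := ⟨j - 1, by omega⟩
  obtain ⟨w, hS⟩ := shortExact_cycles hV.1 n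
  obtain ⟨σ, hσ⟩ := exists_lift_of_extZero hS (hνν _ (hV.2 n) _ (hV.2 (n + 1))) (𝟙 _)
  have := hS.mono_f
  exact h3 (ShortComplex.Splitting.ofExactOfSection _ hS.exact σ hσ
    inferInstance).isoBinaryBiproduct.symm (hνcp.2 (hV.2 (n + 1)) (hV.2 n))

/-- A complex in `ν̃` is contractible when `Ext¹(ν, ν) = 0`: sections `σ` of the maps
`V_{n+1} → Z_n` give the contraction `x ↦ σ (x - σ ∂ x)`. -/
lemma exists_contraction_of_mem_tildeClass
    (hνν : ∀ V ∈ ν, ∀ V' ∈ ν, ExtZero.{w} V V' 1) {V : ChainComplex C ℤ}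
    (hV : V ∈ tildeClass ν) : ∃ s : ∀ a b : ℤ, V.X a ⟶ V.X b, IsContraction s := by
  have sec : ∀ n, ∃ σ : kernel (V.d n (n - 1)) ⟶ V.X (n + 1),
      σ ≫ V.d (n + 1) n = kernel.ι (V.d n (n - 1)) := by
    intro n
    obtain ⟨w, hS⟩ := shortExact_cycles hV.1 n
    obtain ⟨σ, hσ⟩ := exists_lift_of_extZero hS (hνν _ (hV.2 n) _ (hV.2 (n + 1))) (𝟙 _)
    refine ⟨σ, ?_⟩
    have := congrArg (· ≫ kernel.ι _) hσ
    simpa using this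
  choose σ hσ using sec
  -- `t n` is the idempotent `σ ∂` of `V_{n+1}` with image a complement of the cycles.
  let t : ∀ n, V.X (n + 1) ⟶ V.X (n + 1) := fun n =>
    kernel.lift (V.d n (n - 1)) (V.d (n + 1) n) (V.d_comp_d _ _ _) ≫ σ n
  have htd : ∀ n, t n ≫ V.d (n + 1) n = V.d (n + 1) n := fun n => by simp [t, hσ]
  have hdt : ∀ n, V.d (n + 1 + 1) (n + 1) ≫ t n = 0 := fun n => by
    have : V.d (n + 1 + 1) (n + 1) ≫
        kernel.lift (V.d n (n - 1)) (V.d (n + 1) n) (V.d_comp_d _ _ _) = 0 := by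
      rw [← cancel_mono (kernel.ι _)]; simp
    simp only [t, reassoc_of% this, zero_comp]
  have con : ∀ a, ∃ r : V.X a ⟶ V.X (a + 1), ∀ b, (hb : b + 1 = a) →
      r ≫ V.d (a + 1) a = 𝟙 _ - eqToHom (by rw [hb]) ≫ t b ≫ eqToHom (by rw [hb]) ∧
      V.d (a + 1) a ≫ r = t a := by
    intro a
    obtain ⟨b, rfl⟩ : ∃ k, a = k + 1 := ⟨a - 1, by omega⟩
    have hb : b + 1 - 1 = b := by omega
    have h0 : (𝟙 _ - t b) ≫ V.d (b + 1) (b + 1 - 1) = 0 := by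
      rw [hb, Preadditive.sub_comp, htd, Category.id_comp, sub_self]
    refine ⟨kernel.lift (V.d (b + 1) (b + 1 - 1)) (𝟙 _ - t b) h0 ≫ σ (b + 1), fun c hc => ?_⟩
    obtain rfl : c = b := by omega
    refine ⟨by simp [hσ], ?_⟩
    rw [← Category.assoc]
    congr 1
    rw [← cancel_mono (kernel.ι _)]
    simp [Preadditive.comp_sub, hdt]
  choose r hr using con
  refine ⟨fun a b => if h : a + 1 = b then r a ≫ eqToHom (by rw [h]) else 0, fun a => ?_⟩
  have h1 := (hr (a + 1) a rfl).1
  have h2 := (hr a (a - 1) (by omega)).2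
  simp only [dite_true, eqToHom_refl, Category.comp_id, Category.id_comp] at h1 ⊢
  rw [h1, h2, sub_add_cancel]

lemma X_mem_coresDimLE (h3 : IsoClosed ν) (hνcp : FinCoprodClosed ν)
    (hνν : ∀ V ∈ ν, ∀ V' ∈ ν, ExtZero.{w} V V' 1) (n : ℕ) :
    ∀ E ∈ CoresDimLE (tildeClass ν) n, ∀ j, E.X j ∈ CoresDimLE ν n := by
  induction n with
  | zero => exact fun E hE j => mem_of_mem_tildeClass h3 hνcp hνν hE j
  | succ n ih =>
    rintro E ⟨V, hV, K, hK, f, g, _, hS⟩ j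
    exact ⟨V.X j, mem_of_mem_tildeClass h3 hνcp hνν hV j, K.X j, ih K hK j, f.f j, g.f j, _,
      shortExact_eval hS j⟩

/-- Acyclicity of the Hom-complex passes from the contractible complexes in `ν̃` to `ν̃^∨`, by
induction on the coresolution dimension. -/
lemma homAcyclic_coresDimLE {X : ChainComplex C ℤ}
    (hνν : ∀ V ∈ ν, ∀ V' ∈ ν, ExtZero.{w} V V' 1) (n : ℕ) :
    ∀ E ∈ CoresDimLE (tildeClass ν) n,
      (∀ k, ∀ E' ∈ CoresDimLE (tildeClass ν) k, ∀ i j, ExtZero.{w} (X.X i) (E'.X j) 1) →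
      HomAcyclic X E := by
  induction n with
  | zero =>
    intro E hE _
    obtain ⟨s, hs⟩ := exists_contraction_of_mem_tildeClass hνν hE
    exact homAcyclic_of_contraction X hs
  | succ n ih =>
    intro E hE hX
    obtain ⟨V, hV, K, hK, f, g, _, hS⟩ := id hE
    obtain ⟨s, hs⟩ := exists_contraction_of_mem_tildeClass hνν hV
    exact HomAcyclic.of_ses₁ hS
      (fun i j => exists_lift_of_extZero (shortExact_eval hS j) (hX _ E hE i j))
      (homAcyclic_of_contraction X hs) (ih K hK hX)

end TildeClass

end BalancedSystems

open BalancedSystems in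
/-- Let `A` have enough injectives, `X` be closed under
extensions and direct summands, `ω` a relative cogenerator in `X`, `ν` closed
under finite coproducts with `Ext¹(ν,ν) = 0`, `Ext¹(ω,ν^∨) = 0`, and
`Extⁱ(X,ω) = Extⁱ(X,ν) = 0` for `i ≥ 1`. Then `Extⁱ_{Ch}(X•,D•) = 0` for all
`i ≥ 1`, `X• ∈ Ch(X)` and `D• ∈ ν̃^∨`. -/
theorem statement16 {C : Type u} [Category.{v} C] [Abelian C]
    [HasExt.{w} C] [HasExt.{w'} (ChainComplex C ℤ)] [EnoughInjectives C]
    (𝒳 ω ν : Set C)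
    (h1 : IsoClosed 𝒳) (h2 : IsoClosed ω) (h3 : IsoClosed ν)
    (hXe : ExtensionClosed 𝒳) (hXs : SummandClosed 𝒳)
    (hω : RelCogenerator ω 𝒳)
    (hνcp : FinCoprodClosed ν) (hνν : ∀ V ∈ ν, ∀ V' ∈ ν, ExtZero.{w} V V' 1)
    (e4 : ∀ W ∈ ω, ∀ L ∈ CoresVee ν, ExtZero.{w} W L 1)
    (e5 : ∀ A ∈ 𝒳, ∀ W ∈ ω, ∀ i : ℕ, 1 ≤ i → ExtZero.{w} A W i)
    (e5' : ∀ A ∈ 𝒳, ∀ V ∈ ν, ∀ i : ℕ, 1 ≤ i → ExtZero.{w} A V i) :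
    ∀ i : ℕ, 1 ≤ i → ∀ Xc ∈ chClass 𝒳, ∀ Dc ∈ CoresVee (tildeClass ν),
      ExtZero.{w'} Xc Dc i := by
  intro i hi Xc hX Dc ⟨n, hD⟩
  obtain ⟨i, rfl⟩ : ∃ k, i = k + 1 := ⟨i - 1, by omega⟩
  have hE : ∀ k, ∀ E ∈ CoresDimLE (tildeClass ν) k, ∀ a b, ∀ m : ℕ, 1 ≤ m →
      ExtZero.{w} (Xc.X a) (E.X b) m := fun k E hk a b m hm =>
    extZero_coresDimLE hω e4 e5' k _ (X_mem_coresDimLE h3 hνcp hνν k E hk b) _ (hX a) m hm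
  exact extZero_complex Xc i Dc (hE n Dc hD)
    (homAcyclic_coresDimLE hνν n Dc hD fun k E hk a b => hE k E hk a b 1 le_rfl)
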